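/- Let A be an n-by-n reciprocal matrix and w a positive n-vector. Then w is efficient for A if and only if the digraph G(A,w) is strongly connected, i.e., for every ordered pair of distinct vertices i, j there is a directed path from i to j in G(A,w). -/

import Mathlib

/-- An n-by-n positive matrix is reciprocal if `A j i = 1 / A i j` for all `i, j`. -/
def Reciprocal {n : ℕ} (A : Matrix (Fin n) (Fin n) ℝ) : Prop :=
  (∀ i j, 0 < A i j) ∧ ∀ i j, A j i = 1 / A i j

/-- A positive vector `w` is efficient for a reciprocal matrix `A` if every positive
vector `v` with `|v i / v j - A i j| ≤ |w i / w j - A i j|` entrywise is a positive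
scalar multiple of `w`. -/
def Efficient {n : ℕ} (A : Matrix (Fin n) (Fin n) ℝ) (w : Fin n → ℝ) : Prop :=
  ∀ v : Fin n → ℝ, (∀ i, 0 < v i) →
    (∀ i j, |v i / v j - A i j| ≤ |w i / w j - A i j|) →
    ∃ c : ℝ, 0 < c ∧ v = fun i => c * w i

/-- The edge relation of the digraph `G(A,w)`: there is a directed edge `i → j`
(for `i ≠ j`) exactly when `w i / w j ≥ A i j`. -/
def GEdge {n : ℕ} (A : Matrix (Fin n) (Fin n) ℝ) (w : Fin n → ℝ) (i j : Fin n) : Prop :=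
  i ≠ j ∧ A i j ≤ w i / w j

/-!
If `|v i / v j - A i j| ≤ |w i / w j - A i j|` and `i → j` is an edge, then `v i / v j ≤ w i / w j`,
that is, `v i / w i ≤ v j / w j`; strong connectivity makes this quotient constant.
Conversely, if no edge leaves a nonempty proper set `S`, then `w i / w j < A i j` for `i ∈ S` and
`j ∉ S`, and `A j i < w j / w i` because `A i j * A j i ≤ 1`. Multiplying `w` on `S` by a factor
slightly larger than `1` moves these ratios towards the entries of `A` and leaves the others alone.
-/

theorem reflTransGen_of_forall_exists_rel_compl {α : Type*} {r : α → α → Prop}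
    (h : ∀ S : Set α, S.Nonempty → Sᶜ.Nonempty → ∃ i ∈ S, ∃ j ∈ Sᶜ, r i j) (i j : α) :
    Relation.ReflTransGen r i j := by
  by_contra hij
  obtain ⟨k, hik, l, hil, hkl⟩ := h {k | Relation.ReflTransGen r i k} ⟨i, .refl⟩ ⟨j, hij⟩
  exact hil (.tail hik hkl)

open scoped Classical in
/-- The vector obtained from `w` by multiplying its entries on `S` by `t`: the competitor to `w`
when no edge leaves `S`. -/
noncomputable def scaleOn {ι K : Type*} [Mul K] (S : Set ι) (t : K) (w : ι → K) : ι → K :=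
  S.piecewise (t • w) w

theorem scaleOn_of_mem {ι K : Type*} [Mul K] {S : Set ι} {i : ι} (hi : i ∈ S) (t : K) (w : ι → K) :
    scaleOn S t w i = t * w i := by
  simp [scaleOn, hi]

theorem scaleOn_of_notMem {ι K : Type*} [Mul K] {S : Set ι} {i : ι} (hi : i ∉ S) (t : K)
    (w : ι → K) : scaleOn S t w i = w i := by
  simp [scaleOn, hi]

section OrderedField

variable {ι K : Type*} [Field K] [LinearOrder K]

/-- `Efficient` over an arbitrary index type and ordered field. As there, positivity of `w` and
conditions on `A` are not part of the definition. -/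
def IsEfficient (A : Matrix ι ι K) (w : ι → K) : Prop :=
  ∀ v : ι → K, (∀ i, 0 < v i) →
    (∀ i j, |v i / v j - A i j| ≤ |w i / w j - A i j|) →
    ∃ c : K, 0 < c ∧ v = fun i => c * w i

/-- `GEdge`, the edge relation of the digraph `G(A,w)`, over an arbitrary index type and ordered
field. -/
def EfficiencyEdge (A : Matrix ι ι K) (w : ι → K) (i j : ι) : Prop :=
  i ≠ j ∧ A i j ≤ w i / w j

variable [IsStrictOrderedRing K] {A : Matrix ι ι K} {v w : ι → K} {S : Set ι} {t : K}

theorem scaleOn_pos (ht : 0 < t) (hw : ∀ i, 0 < w i) (i : ι) : 0 < scaleOn S t w i := by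
  by_cases hi : i ∈ S
  · simpa only [scaleOn_of_mem hi] using mul_pos ht (hw i)
  · simpa only [scaleOn_of_notMem hi] using hw i

theorem scaleOn_div_mem_uIcc (hA : Pairwise fun i j => A i j * A j i ≤ 1) (hw : ∀ i, 0 < w i)
    (ht : 1 ≤ t) (hS : ∀ i ∈ S, ∀ j ∈ Sᶜ, t * (w i / w j) ≤ A i j) (i j : ι) :
    scaleOn S t w i / scaleOn S t w j ∈ Set.uIcc (A i j) (w i / w j) := by
  have ht₀ : 0 < t := one_pos.trans_le ht
  have hdiv (k l : ι) : 0 < w k / w l := div_pos (hw k) (hw l)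
  by_cases hi : i ∈ S <;> by_cases hj : j ∈ S
  · rw [scaleOn_of_mem hi, scaleOn_of_mem hj, mul_div_mul_left _ _ ht₀.ne']
    exact Set.right_mem_uIcc
  · rw [scaleOn_of_mem hi, scaleOn_of_notMem hj, mul_div_assoc]
    exact Set.Icc_subset_uIcc' ⟨le_mul_of_one_le_left (hdiv i j).le ht, hS i hi j hj⟩
  · have hratio : w i / (t * w j) = (t * (w j / w i))⁻¹ := by
      rw [← mul_div_assoc, inv_div]
    have hA_pos : 0 < A j i := (mul_pos ht₀ (hdiv j i)).trans_le (hS j hj i hi)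
    have hA_le : A i j ≤ (A j i)⁻¹ := by
      rw [← one_div, le_div_iff₀ hA_pos]
      exact hA (ne_of_mem_of_not_mem hj hi).symm
    rw [scaleOn_of_notMem hi, scaleOn_of_mem hj]
    refine Set.Icc_subset_uIcc ⟨?_, ?_⟩
    · rw [hratio]
      exact hA_le.trans (inv_anti₀ (mul_pos ht₀ (hdiv j i)) (hS j hj i hi))
    · exact div_le_div_of_nonneg_left (hw i).le (hw j) (le_mul_of_one_le_left (hw j).le ht)
  · rw [scaleOn_of_notMem hi, scaleOn_of_notMem hj]
    exact Set.right_mem_uIcc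

theorem exists_one_lt_forall_mul_lt {α : Type*} {s : Set α} (hs : s.Finite) {f g : α → K}
    (hf : ∀ a ∈ s, 0 < f a) (hfg : ∀ a ∈ s, f a < g a) : ∃ t, 1 < t ∧ ∀ a ∈ s, t * f a < g a := by
  have hone_lt : ∀ x ∈ ({1} : Finset K), ∀ y ∈ (hs.image fun a => g a / f a).toFinset, x < y := by
    simpa using fun a ha => (one_lt_div (hf a ha)).2 (hfg a ha)
  obtain ⟨t, ht, hts⟩ := Finset.exists_between' _ _ hone_lt
  refine ⟨t, ht 1 (Finset.mem_singleton_self 1), fun a ha => ?_⟩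
  rw [← lt_div_iff₀ (hf a ha)]
  exact hts _ ((Set.Finite.mem_toFinset _).2 (Set.mem_image_of_mem _ ha))

theorem IsEfficient.exists_efficiencyEdge_compl [Finite ι] (h : IsEfficient A w)
    (hA : Pairwise fun i j => A i j * A j i ≤ 1) (hw : ∀ i, 0 < w i)
    (hS : S.Nonempty) (hSc : Sᶜ.Nonempty) : ∃ i ∈ S, ∃ j ∈ Sᶜ, EfficiencyEdge A w i j := by
  by_contra! hcut
  have hlt : ∀ p ∈ S ×ˢ Sᶜ, w p.1 / w p.2 < A p.1 p.2 := fun p hp =>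
    not_le.1 fun hle => hcut _ hp.1 _ hp.2 ⟨ne_of_mem_of_not_mem hp.1 hp.2, hle⟩
  obtain ⟨t, ht, hmul⟩ := exists_one_lt_forall_mul_lt (Set.toFinite _)
    (fun p _ => div_pos (hw p.1) (hw p.2)) hlt
  obtain ⟨c, -, hc⟩ := h (scaleOn S t w) (scaleOn_pos (one_pos.trans ht) hw) fun i j =>
    Set.abs_sub_left_of_mem_uIcc <|
      scaleOn_div_mem_uIcc hA hw ht.le (fun k hk l hl => (hmul (k, l) ⟨hk, hl⟩).le) i j
  obtain ⟨i, hi⟩ := hS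
  obtain ⟨j, hj⟩ := hSc
  have htc : t = c := mul_right_cancel₀ (hw i).ne' <| by
    simpa only [scaleOn_of_mem hi] using congrFun hc i
  have h1c : 1 = c := mul_right_cancel₀ (hw j).ne' <| by
    simpa only [scaleOn_of_notMem hj, one_mul] using congrFun hc j
  exact ht.ne (h1c.trans htc.symm)

theorem EfficiencyEdge.div_le_div {i j : ι} (h : EfficiencyEdge A w i j) (hvj : 0 < v j)
    (hwi : 0 < w i) (hwj : 0 < w j) (hvw : |v i / v j - A i j| ≤ |w i / w j - A i j|) :
    v i / w i ≤ v j / w j := by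
  have hle : v i / v j ≤ w i / w j := by
    rw [abs_of_nonneg (sub_nonneg.2 h.2)] at hvw
    exact (sub_le_sub_iff_right _).1 ((le_abs_self _).trans hvw)
  rwa [div_le_div_iff₀ hwi hwj, mul_comm (v j), ← div_le_div_iff₀ hvj hwj]

theorem isEfficient_of_transGen (hw : ∀ i, 0 < w i)
    (h : ∀ i j, i ≠ j → Relation.TransGen (EfficiencyEdge A w) i j) : IsEfficient A w := by
  intro v hv hvw
  have hmono {i j : ι} (hij : Relation.TransGen (EfficiencyEdge A w) i j) :
      v i / w i ≤ v j / w j := by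
    induction hij with
    | single hedge => exact hedge.div_le_div (hv _) (hw _) (hw _) (hvw _ _)
    | tail _ hedge ih => exact ih.trans (hedge.div_le_div (hv _) (hw _) (hw _) (hvw _ _))
  have hconst (i j : ι) : v i / w i = v j / w j := by
    obtain rfl | hij := eq_or_ne i j
    · rfl
    · exact le_antisymm (hmono (h i j hij)) (hmono (h j i hij.symm))
  obtain _ | ⟨⟨i⟩⟩ := isEmpty_or_nonempty ι
  · exact ⟨1, one_pos, Subsingleton.elim _ _⟩
  · refine ⟨v i / w i, div_pos (hv i) (hw i), funext fun j => ?_⟩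
    rw [hconst i j, div_mul_cancel₀ _ (hw j).ne']

theorem stmt_4_general [Finite ι] (A : Matrix ι ι K) (hA : Pairwise fun i j => A i j * A j i ≤ 1)
    (w : ι → K) (hw : ∀ i, 0 < w i) :
    IsEfficient A w ↔ ∀ i j, i ≠ j → Relation.TransGen (EfficiencyEdge A w) i j := by
  refine ⟨fun h i j hij => ?_, isEfficient_of_transGen hw⟩
  have hpath : Relation.ReflTransGen (EfficiencyEdge A w) i j :=
    reflTransGen_of_forall_exists_rel_compl
      (fun _ => h.exists_efficiencyEdge_compl hA hw) i j
  exact (Relation.reflTransGen_iff_eq_or_transGen.1 hpath).resolve_left hij.symm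

end OrderedField

/-- Blanquero–Carrizosa–Conde: `w` is efficient for `A` iff `G(A,w)` is strongly
connected (for every ordered pair of distinct vertices there is a directed path). -/
theorem stmt_4 {n : ℕ} (A : Matrix (Fin n) (Fin n) ℝ) (hA : Reciprocal A)
    (w : Fin n → ℝ) (hw : ∀ i, 0 < w i) :
    Efficient A w ↔ ∀ i j : Fin n, i ≠ j → Relation.TransGen (GEdge A w) i j := by
  have hA_mul (i j : Fin n) : A i j * A j i = 1 := by
    rw [hA.2 i j, mul_one_div_cancel (hA.1 i j).ne']
  exact stmt_4_general A (fun i j _ => (hA_mul i j).le) w hw
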